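/- arXiv:2303.14262 — 2 statements merged into one kernel-verified Lean document; each statement's English description precedes it below -/
import Mathlib

section
/- Let C be a symmetric positive definite 6×6 real matrix, e a real 6×3 matrix, and ε_eps a symmetric positive definite 3×3 real matrix. Define S = C⁻¹, d = eᵀ·S, ε_sig = ε_eps + d·e, g = ε_sig⁻¹·d, and S_D = S − dᵀ·g. Then for all vectors strain ∈ ℝ⁶, stress ∈ ℝ⁶, E ∈ ℝ³, D ∈ ℝ³, the e-type constitutive relations (stress = C·strain − e·E and D = eᵀ·strain + ε_eps·E) hold if and only if the g-type constitutive relations (strain = S_D·stress + gᵀ·D and E = −g·stress + ε_sig⁻¹·D) hold. -/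
open Matrix

/-!
Both changes of constitutive law are one operation on a 2 × 2 block linear system: solve the first
equation for its first unknown and substitute into the second, which produces a Schur complement.
Solving the e-type law for the strain gives the d-type law `ε = S σ + dᵀ E`, `D = d σ + ε^σ E`;
solving that one for the electric field gives the g-type law. As `C` and `ε^ε` are symmetric, the
two coupling blocks of each law are transposes up to sign; as they are positive definite, so is
`ε^σ`.
-/

section BlockSystem

variable {k m n R : Type*} [Fintype m] [Fintype n] [DecidableEq n] [CommRing R]

theorem eq_mulVec_add_iff_eq_inv_mulVec_sub {A : Matrix n n R} (hA : IsUnit A) (x y z : n → R) :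
    y = A *ᵥ x + z ↔ x = A⁻¹ *ᵥ (y - z) := by
  have hdet : IsUnit A.det := (isUnit_iff_isUnit_det A).1 hA
  constructor
  · rintro rfl
    rw [add_sub_cancel_right, mulVec_mulVec, nonsing_inv_mul A hdet, one_mulVec]
  · rintro rfl
    rw [mulVec_mulVec, mul_nonsing_inv A hdet, one_mulVec, sub_add_cancel]

theorem block_mulVec_eq_iff_schur_complement {A : Matrix n n R} (hA : IsUnit A) (B : Matrix n m R)
    (P : Matrix k n R) (Q : Matrix k m R) (x y : n → R) (u : m → R) (w : k → R) :
    (y = A *ᵥ x + B *ᵥ u ∧ w = P *ᵥ x + Q *ᵥ u) ↔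
      (x = A⁻¹ *ᵥ y - (A⁻¹ * B) *ᵥ u ∧ w = (P * A⁻¹) *ᵥ y + (Q - P * A⁻¹ * B) *ᵥ u) := by
  rw [eq_mulVec_add_iff_eq_inv_mulVec_sub hA, mulVec_sub, mulVec_mulVec]
  refine and_congr_right fun hx => ?_
  have hsubst : P *ᵥ x + Q *ᵥ u = (P * A⁻¹) *ᵥ y + (Q - P * A⁻¹ * B) *ᵥ u := by
    rw [hx, mulVec_sub, mulVec_mulVec, mulVec_mulVec, sub_mulVec, Matrix.mul_assoc P]
    abel
  rw [hsubst]

end BlockSystem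

theorem isSymm_transpose_mul_mul_same {m n R : Type*} [Fintype n] [NonUnitalCommSemiring R]
    {A : Matrix n n R} (hA : A.IsSymm) (B : Matrix n m R) : (Bᵀ * A * B).IsSymm := by
  rw [IsSymm, transpose_mul, transpose_mul, transpose_transpose, hA.eq, Matrix.mul_assoc]

theorem posDef_add_conjTranspose_mul_inv_mul {m n R : Type*} [Finite m] [Fintype n] [DecidableEq n]
    [CommRing R] [PartialOrder R] [StarRing R] [AddLeftMono R] {A : Matrix m m R} {C : Matrix n n R}
    (hA : A.PosDef) (hC : C.PosSemidef) (B : Matrix n m R) : (A + Bᴴ * C⁻¹ * B).PosDef :=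
  hA.add_posSemidef (hC.inv.conjTranspose_mul_mul_same B)

section ConstitutiveLaws

variable {k m n R : Type*} [Fintype m] [Fintype n] [CommRing R]

theorem etype_iff_dtype [DecidableEq n] {C : Matrix n n R} (hC : IsUnit C) (e : Matrix n m R)
    (f : Matrix k n R) (κ : Matrix k m R) (strain stress : n → R) (E : m → R) (D : k → R) :
    (stress = C *ᵥ strain - e *ᵥ E ∧ D = f *ᵥ strain + κ *ᵥ E) ↔
      (strain = C⁻¹ *ᵥ stress + (C⁻¹ * e) *ᵥ E ∧
        D = (f * C⁻¹) *ᵥ stress + (κ + f * C⁻¹ * e) *ᵥ E) := by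
  simpa only [neg_mulVec, Matrix.mul_neg, ← sub_eq_add_neg, sub_neg_eq_add] using
    block_mulVec_eq_iff_schur_complement hC (-e) f κ strain stress E D

theorem dtype_iff_gtype [DecidableEq m] {κ : Matrix m m R} (hκ : IsUnit κ) (S : Matrix k n R)
    (p : Matrix k m R) (q : Matrix m n R) (strain : k → R) (stress : n → R) (E D : m → R) :
    (strain = S *ᵥ stress + p *ᵥ E ∧ D = q *ᵥ stress + κ *ᵥ E) ↔
      (strain = (S - p * κ⁻¹ * q) *ᵥ stress + (p * κ⁻¹) *ᵥ D ∧
        E = -((κ⁻¹ * q) *ᵥ stress) + κ⁻¹ *ᵥ D) := by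
  simpa only [add_comm, and_comm, sub_eq_add_neg] using
    block_mulVec_eq_iff_schur_complement hκ q p S E D stress strain

theorem etype_iff_gtype_general [DecidableEq m] [DecidableEq n]
    {C S S_D : Matrix n n R} {e : Matrix n m R} {ε_eps ε_sig : Matrix m m R} {d g : Matrix m n R}
    (hC : IsUnit C) (hCsymm : C.IsSymm) (hεsymm : ε_eps.IsSymm) (hεunit : IsUnit ε_sig)
    (hS : S = C⁻¹) (hd : d = eᵀ * S) (hεsig : ε_sig = ε_eps + d * e) (hg : g = ε_sig⁻¹ * d)
    (hSD : S_D = S - dᵀ * g) (strain stress : n → R) (E D : m → R) :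
    (stress = C *ᵥ strain - e *ᵥ E ∧ D = eᵀ *ᵥ strain + ε_eps *ᵥ E) ↔
      (strain = S_D *ᵥ stress + gᵀ *ᵥ D ∧ E = -(g *ᵥ stress) + ε_sig⁻¹ *ᵥ D) := by
  have hSsymm : S.IsSymm := hS ▸ hCsymm.inv
  have hdT : dᵀ = S * e := by rw [hd, transpose_mul, transpose_transpose, hSsymm.eq]
  have hεsigsymm : ε_sig.IsSymm := by
    rw [hεsig, hd]
    exact hεsymm.add (isSymm_transpose_mul_mul_same hSsymm e)
  have hgT : gᵀ = dᵀ * ε_sig⁻¹ := by rw [hg, transpose_mul, hεsigsymm.inv.eq]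
  have hSD' : S_D = S - dᵀ * ε_sig⁻¹ * d := by rw [hSD, hg, Matrix.mul_assoc]
  calc
    _ ↔ (strain = S *ᵥ stress + dᵀ *ᵥ E ∧ D = d *ᵥ stress + ε_sig *ᵥ E) := by
      rw [etype_iff_dtype hC, ← hS, ← hd, ← hdT, ← hεsig]
    _ ↔ _ := by rw [dtype_iff_gtype hεunit, ← hSD', ← hgT, ← hg]

end ConstitutiveLaws

/-- equivalence of the `e`-type and `g`-type piezoelectric
constitutive relations, where `S = C⁻¹`, `d = eᵀ·S`, `ε_sig = ε_eps + d·e`,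
`g = ε_sig⁻¹·d` and `S_D = S − dᵀ·g`. -/
theorem etype_iff_gtype
    (C : Matrix (Fin 6) (Fin 6) ℝ) (e : Matrix (Fin 6) (Fin 3) ℝ)
    (ε_eps : Matrix (Fin 3) (Fin 3) ℝ)
    (hC : C.PosDef) (hεeps : ε_eps.PosDef)
    (S : Matrix (Fin 6) (Fin 6) ℝ) (hS : S = C⁻¹)
    (d : Matrix (Fin 3) (Fin 6) ℝ) (hd : d = eᵀ * S)
    (ε_sig : Matrix (Fin 3) (Fin 3) ℝ) (hεsig : ε_sig = ε_eps + d * e)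
    (g : Matrix (Fin 3) (Fin 6) ℝ) (hg : g = ε_sig⁻¹ * d)
    (S_D : Matrix (Fin 6) (Fin 6) ℝ) (hSD : S_D = S - dᵀ * g) :
    ∀ (strain stress : Fin 6 → ℝ) (E D : Fin 3 → ℝ),
      (stress = C.mulVec strain - e.mulVec E ∧
          D = eᵀ.mulVec strain + ε_eps.mulVec E) ↔
        (strain = S_D.mulVec stress + gᵀ.mulVec D ∧
          E = -(g.mulVec stress) + (ε_sig⁻¹).mulVec D) := by
  have hεunit : IsUnit ε_sig := by
    rw [hεsig, hd, hS, ← conjTranspose_eq_transpose_of_trivial]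
    exact (posDef_add_conjTranspose_mul_inv_mul hεeps hC.posSemidef e).isUnit
  exact etype_iff_gtype_general hC.isUnit (isHermitian_iff_isSymm.1 hC.isHermitian)
    (isHermitian_iff_isSymm.1 hεeps.isHermitian) hεunit hS hd hεsig hg hSD
end

section
/- Let a, b ∈ ℝ³ with aᵢ ≤ bᵢ for each i, and let T = [a₁,b₁]×[a₂,b₂]×[a₃,b₃] be the closed box. Let σ : ℝ³ → Matrix (Fin 3) (Fin 3) ℝ be continuously differentiable on a neighborhood of T with σ(x) symmetric for every x, and let u : ℝ³ → ℝ³ be continuously differentiable on a neighborhood of T. Write ε(u)(x) = ½(∇u(x) + ∇u(x)ᵀ). For each of the six faces F of T with outward unit normal n_F ∈ {±e₁, ±e₂, ±e₃}, set σ_nn = ⟪σ·n_F, n_F⟫, σ_nt = σ·n_F − σ_nn • n_F, u_n = ⟪u, n_F⟫, u_t = u − u_n • n_F on F. Then ∫_T trace(σᵀ·ε(u)) dx − Σ_F ∫_F σ_nn · u_n dS = −∫_T ⟪div σ, u⟫ dx + Σ_F ∫_F ⟪σ_nt, u_t⟫ dS, where (div σ)ᵢ = Σⱼ ∂ⱼσᵢⱼ,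 (∇u)ᵢⱼ = ∂ⱼuᵢ, the sums run over the six faces of T, and dS is the 2-dimensional Lebesgue measure on each face. -/
open Matrix MeasureTheory

attribute [local instance] Matrix.normedAddCommGroup Matrix.normedSpace

/-- The gradient matrix `(∇u(x))ᵢⱼ = ∂ⱼuᵢ(x)`. -/
noncomputable def gradMat (u : (Fin 3 → ℝ) → (Fin 3 → ℝ)) (x : Fin 3 → ℝ) :
    Matrix (Fin 3) (Fin 3) ℝ :=
  Matrix.of fun i j => fderiv ℝ u x (Pi.single j 1) i

/-- The linear strain `ε(u)(x) = ½(∇u(x) + ∇u(x)ᵀ)`. -/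
noncomputable def strainMat (u : (Fin 3 → ℝ) → (Fin 3 → ℝ)) (x : Fin 3 → ℝ) :
    Matrix (Fin 3) (Fin 3) ℝ :=
  (1 / 2 : ℝ) • (gradMat u x + (gradMat u x)ᵀ)

/-- The row-wise divergence `(div σ)(x)ᵢ = Σⱼ ∂ⱼσᵢⱼ(x)`. -/
noncomputable def divMat (σ : (Fin 3 → ℝ) → Matrix (Fin 3) (Fin 3) ℝ)
    (x : Fin 3 → ℝ) : Fin 3 → ℝ :=
  fun i => ∑ j : Fin 3, fderiv ℝ σ x (Pi.single j 1) i j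

/-- Integral of `f` over the face of the box `Icc a b` on which the `j`-th
coordinate equals `c`, with respect to 2-dimensional Lebesgue measure
(the face is parametrized over `Icc (a ∘ j.succAbove) (b ∘ j.succAbove)`). -/
noncomputable def faceIntegral (a b : Fin 3 → ℝ) (j : Fin 3) (c : ℝ)
    (f : (Fin 3 → ℝ) → ℝ) : ℝ :=
  ∫ y in Set.Icc (a ∘ j.succAbove) (b ∘ j.succAbove), f (j.insertNth c y)

/-- `σ_nn = ⟪σ·n, n⟫` for outward unit normal `nrm`. -/
def sigNN (σ : (Fin 3 → ℝ) → Matrix (Fin 3) (Fin 3) ℝ) (nrm : Fin 3 → ℝ)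
    (x : Fin 3 → ℝ) : ℝ :=
  ((σ x).mulVec nrm) ⬝ᵥ nrm

/-- `σ_nt = σ·n − σ_nn • n` for outward unit normal `nrm`. -/
def sigNT (σ : (Fin 3 → ℝ) → Matrix (Fin 3) (Fin 3) ℝ) (nrm : Fin 3 → ℝ)
    (x : Fin 3 → ℝ) : Fin 3 → ℝ :=
  (σ x).mulVec nrm - sigNN σ nrm x • nrm

/-- `u_n = ⟪u, n⟫` for outward unit normal `nrm`. -/
def uN (u : (Fin 3 → ℝ) → (Fin 3 → ℝ)) (nrm : Fin 3 → ℝ) (x : Fin 3 → ℝ) : ℝ :=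
  u x ⬝ᵥ nrm

/-- `u_t = u − u_n • n` for outward unit normal `nrm`. -/
def uT (u : (Fin 3 → ℝ) → (Fin 3 → ℝ)) (nrm : Fin 3 → ℝ) (x : Fin 3 → ℝ) :
    Fin 3 → ℝ :=
  u x - uN u nrm x • nrm

/-!
The product rule gives `div (σᵀu) = σ : ∇u + div σ · u`, and `σ : ∇u = σ : ε(u)` because `σ` is
symmetric. The flux of `σᵀu` through the boundary is `∫ σn · u dS`, whose integrand splits
orthogonally as `σ_nn u_n + σ_nt · u_t`. Moving the normal part to the volume integral of `σ : ε(u)`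
and the tangential part to that of `div σ · u` in the divergence theorem gives the identity.
-/

section NormalTangential

variable {ι R : Type*} [Fintype ι]

/-- The normal part `v_n = ⟪v, n⟫` of a vector `v` on a surface with unit normal `ν = n`. -/
def normalPart [CommRing R] (ν v : ι → R) : R :=
  v ⬝ᵥ ν

/-- The tangential part `v_t = v - v_n • n` of a vector `v` on a surface with unit normal
`ν = n`. -/
def tangentialPart [CommRing R] (ν v : ι → R) : ι → R :=
  v - normalPart ν v • ν

theorem normalPart_mul_add_tangentialPart_dotProduct [CommRing R] {ν : ι → R} (hν : ν ⬝ᵥ ν = 1)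
    (v w : ι → R) :
    normalPart ν v * normalPart ν w + tangentialPart ν v ⬝ᵥ tangentialPart ν w = v ⬝ᵥ w := by
  simp only [tangentialPart, normalPart, sub_dotProduct, dotProduct_sub, smul_dotProduct,
    dotProduct_smul, hν, dotProduct_comm ν w, smul_eq_mul]
  ring

theorem continuousOn_dotProduct {X : Type*} [TopologicalSpace X] [NonUnitalNonAssocSemiring R]
    [TopologicalSpace R] [IsTopologicalSemiring R] {s : Set X} {v w : X → ι → R}
    (hv : ContinuousOn v s) (hw : ContinuousOn w s) : ContinuousOn (fun x => v x ⬝ᵥ w x) s :=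
  (continuous_fst.dotProduct continuous_snd).comp_continuousOn (hv.prodMk hw)

theorem continuousOn_normalPart {X : Type*} [TopologicalSpace X] [CommRing R] [TopologicalSpace R]
    [IsTopologicalRing R] {s : Set X} {v : X → ι → R} (hv : ContinuousOn v s) (ν : ι → R) :
    ContinuousOn (fun x => normalPart ν (v x)) s :=
  continuousOn_dotProduct hv continuousOn_const

theorem continuousOn_tangentialPart {X : Type*} [TopologicalSpace X] [CommRing R]
    [TopologicalSpace R] [IsTopologicalRing R] {s : Set X} {v : X → ι → R}
    (hv : ContinuousOn v s) (ν : ι → R) : ContinuousOn (fun x => tangentialPart ν (v x)) s :=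
  hv.sub ((continuousOn_normalPart hv ν).smul continuousOn_const)

theorem trace_transpose_mul_symmetrization [Field R] [NeZero (2 : R)] {S : Matrix ι ι R}
    (hS : S.IsSymm) (G : Matrix ι ι R) :
    trace (Sᵀ * ((1 / 2 : R) • (G + Gᵀ))) = trace (Sᵀ * G) := by
  have trace_mul_transpose : trace (Sᵀ * Gᵀ) = trace (Sᵀ * G) := by
    rw [← transpose_mul, trace_transpose, trace_mul_comm, hS.eq]
  rw [mul_smul_comm, mul_add, trace_smul, trace_add, trace_mul_transpose, smul_eq_mul]
  field_simp
  ring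

end NormalTangential

section Differential

theorem hasFDerivAt_vecMul {m n F : Type*} [Fintype m] [Finite n] [NormedAddCommGroup F]
    [NormedSpace ℝ F] {σ : F → Matrix m n ℝ} {u : F → m → ℝ} {σ' : F →L[ℝ] Matrix m n ℝ}
    {u' : F →L[ℝ] m → ℝ} {x : F}
    (hσ : HasFDerivAt σ σ' x) (hu : HasFDerivAt u u' x) :
    HasFDerivAt (fun y => u y ᵥ* σ y)
      (.pi fun j => ∑ i, (u x i • (.proj j ∘L (.proj i ∘L σ' : F →L[ℝ] n → ℝ)) +
        σ x i j • (.proj i ∘L u'))) x := by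
  cases nonempty_fintype n
  have hu_apply (i) := hasFDerivAt_pi'.1 hu i
  have hσ_apply (i j) := hasFDerivAt_pi'.1 (hasFDerivAt_pi'.1 hσ i) j
  exact hasFDerivAt_pi.2 fun j => .fun_sum fun i _ => (hu_apply i).mul (hσ_apply i j)

variable {ι κ : Type*} [Fintype ι] [DecidableEq ι] [Fintype κ]

/-- The Jacobian matrix `(∇u)ᵢⱼ = ∂ⱼuᵢ` in any dimension; `gradMat` is its three-dimensional
case. -/
noncomputable def jacobian (u : (ι → ℝ) → κ → ℝ) (x : ι → ℝ) : Matrix κ ι ℝ :=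
  Matrix.of fun i j => fderiv ℝ u x (Pi.single j 1) i

/-- The linear strain `ε(u) = ½(∇u + ∇uᵀ)` in any dimension; `strainMat` is its
three-dimensional case. -/
noncomputable def symmGrad (u : (ι → ℝ) → ι → ℝ) (x : ι → ℝ) : Matrix ι ι ℝ :=
  (1 / 2 : ℝ) • (jacobian u x + (jacobian u x)ᵀ)

/-- The row-wise divergence `(div σ)ᵢ = ∑ⱼ ∂ⱼσᵢⱼ` of a possibly rectangular matrix field; `divMat`
is its three-dimensional case. -/
noncomputable def rowDiv (σ : (ι → ℝ) → Matrix κ ι ℝ) (x : ι → ℝ) : κ → ℝ :=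
  fun i => ∑ j, fderiv ℝ σ x (Pi.single j 1) i j

theorem trace_jacobian_vecMul {σ : (ι → ℝ) → Matrix κ ι ℝ} {u : (ι → ℝ) → κ → ℝ} {x : ι → ℝ}
    (hσ : DifferentiableAt ℝ σ x) (hu : DifferentiableAt ℝ u x) :
    trace (jacobian (fun y => u y ᵥ* σ y) x) =
      trace ((σ x)ᵀ * jacobian u x) + rowDiv σ x ⬝ᵥ u x := by
  have product_rule : trace (jacobian (fun y => u y ᵥ* σ y) x) =
      ∑ j, ∑ i, (u x i * fderiv ℝ σ x (Pi.single j 1) i j +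
        σ x i j * fderiv ℝ u x (Pi.single j 1) i) := by
    simp only [trace, diag_apply, jacobian, of_apply,
      (hasFDerivAt_vecMul hσ.hasFDerivAt hu.hasFDerivAt).fderiv, ContinuousLinearMap.pi_apply,
      _root_.sum_apply, _root_.add_apply, _root_.smul_apply, smul_eq_mul]
    rfl
  rw [product_rule]
  simp only [trace, diag_apply, mul_apply, transpose_apply, jacobian, of_apply,
    rowDiv, dotProduct, Finset.sum_mul, Finset.sum_add_distrib]
  rw [Finset.sum_comm (f := fun i j => fderiv ℝ σ x (Pi.single j 1) i j * u x i), add_comm]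
  simp only [mul_comm]

theorem continuousOn_jacobian {u : (ι → ℝ) → κ → ℝ} {U : Set (ι → ℝ)} (hU : IsOpen U)
    (hu : ContDiffOn ℝ 1 u U) : ContinuousOn (jacobian u) U :=
  continuousOn_pi.2 fun i => continuousOn_pi.2 fun _ => (continuous_apply i).comp_continuousOn <|
    (hu.continuousOn_fderiv_of_isOpen hU le_rfl).clm_apply continuousOn_const

theorem continuousOn_symmGrad {u : (ι → ℝ) → ι → ℝ} {U : Set (ι → ℝ)} (hU : IsOpen U)
    (hu : ContDiffOn ℝ 1 u U) : ContinuousOn (symmGrad u) U :=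
  have hJ := continuousOn_jacobian hU hu
  (hJ.add (continuous_id.matrix_transpose.comp_continuousOn hJ)).const_smul (1 / 2 : ℝ)

theorem continuousOn_rowDiv {σ : (ι → ℝ) → Matrix κ ι ℝ} {U : Set (ι → ℝ)} (hU : IsOpen U)
    (hσ : ContDiffOn ℝ 1 σ U) : ContinuousOn (rowDiv σ) U :=
  continuousOn_pi.2 fun i => continuousOn_finsetSum _ fun j _ =>
    (continuous_id.matrix_elem i j).comp_continuousOn <|
      (hσ.continuousOn_fderiv_of_isOpen hU le_rfl).clm_apply continuousOn_const

theorem integrableOn_trace_transpose_mul_symmGrad {σ : (ι → ℝ) → Matrix ι ι ℝ}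
    {u : (ι → ℝ) → ι → ℝ} {K U : Set (ι → ℝ)} (hK : IsCompact K) (hU : IsOpen U) (hKU : K ⊆ U)
    (hσ : ContinuousOn σ K) (hu : ContDiffOn ℝ 1 u U) :
    IntegrableOn (fun x => trace ((σ x)ᵀ * symmGrad u x)) K := by
  have hε : ContinuousOn (symmGrad u) K := (continuousOn_symmGrad hU hu).mono hKU
  refine ContinuousOn.integrableOn_compact hK ?_
  rw [continuousOn_iff_continuous_domRestrict] at hσ hε ⊢
  exact (hσ.matrix_transpose.matrix_mul hε).matrix_trace

theorem integrableOn_rowDiv_dotProduct {σ : (ι → ℝ) → Matrix κ ι ℝ} {u : (ι → ℝ) → κ → ℝ}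
    {K U : Set (ι → ℝ)} (hK : IsCompact K) (hU : IsOpen U) (hKU : K ⊆ U)
    (hσ : ContDiffOn ℝ 1 σ U) (hu : ContinuousOn u K) :
    IntegrableOn (fun x => rowDiv σ x ⬝ᵥ u x) K :=
  (continuousOn_dotProduct ((continuousOn_rowDiv hU hσ).mono hKU) hu).integrableOn_compact hK

end Differential

section Box

variable {n : ℕ} {a b : Fin (n + 1) → ℝ}
variable {E : Type*} [NormedAddCommGroup E] [NormedSpace ℝ E]

/-- The integral of `f` over the section of the box `Icc a b` on which the `j`-th coordinate equals
`c`, in any dimension; `faceIntegral` is its three-dimensional case. -/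
noncomputable def boxFaceIntegral (a b : Fin (n + 1) → ℝ) (j : Fin (n + 1)) (c : ℝ)
    (f : (Fin (n + 1) → ℝ) → E) : E :=
  ∫ y in Set.Icc (a ∘ j.succAbove) (b ∘ j.succAbove), f (j.insertNth c y)

/-- The surface integral over the boundary of the box `Icc a b` of an integrand `f ν x` depending
on the outward unit normal `ν` and on the point `x`, as the sum over the pairs of opposite faces. -/
noncomputable def boxBoundaryIntegral (a b : Fin (n + 1) → ℝ)
    (f : (Fin (n + 1) → ℝ) → (Fin (n + 1) → ℝ) → E) : E :=
  ∑ j, (boxFaceIntegral a b j (b j) (f (Pi.single j 1)) +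
    boxFaceIntegral a b j (a j) (f (-Pi.single j 1)))

theorem boxFaceIntegral_add {j : Fin (n + 1)} {c : ℝ} (hc : c ∈ Set.Icc (a j) (b j))
    {f g : (Fin (n + 1) → ℝ) → E} (hf : ContinuousOn f (Set.Icc a b))
    (hg : ContinuousOn g (Set.Icc a b)) :
    boxFaceIntegral a b j c (fun x => f x + g x) =
      boxFaceIntegral a b j c f + boxFaceIntegral a b j c g := by
  have integrableOn_face {h : (Fin (n + 1) → ℝ) → E} (hh : ContinuousOn h (Set.Icc a b)) :
      IntegrableOn (fun y => h (j.insertNth c y))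
        (Set.Icc (a ∘ j.succAbove) (b ∘ j.succAbove)) :=
    (hh.comp (continuous_const.finInsertNth j continuous_id).continuousOn
      fun _ hy => Fin.insertNth_mem_Icc.2 ⟨hc, hy⟩).integrableOn_compact isCompact_Icc
  exact integral_add (integrableOn_face hf) (integrableOn_face hg)

theorem boxBoundaryIntegral_add (hab : a ≤ b) {f g : (Fin (n + 1) → ℝ) → (Fin (n + 1) → ℝ) → E}
    (hf : ∀ ν, ContinuousOn (f ν) (Set.Icc a b)) (hg : ∀ ν, ContinuousOn (g ν) (Set.Icc a b)) :
    boxBoundaryIntegral a b (fun ν x => f ν x + g ν x) =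
      boxBoundaryIntegral a b f + boxBoundaryIntegral a b g := by
  simp only [boxBoundaryIntegral, boxFaceIntegral_add (Set.right_mem_Icc.2 (hab _)) (hf _) (hg _),
    boxFaceIntegral_add (Set.left_mem_Icc.2 (hab _)) (hf _) (hg _), ← Finset.sum_add_distrib]
  exact Finset.sum_congr rfl fun _ _ => add_add_add_comm ..

theorem boxBoundaryIntegral_congr {f g : (Fin (n + 1) → ℝ) → (Fin (n + 1) → ℝ) → E}
    (hfg : ∀ ν, ν ⬝ᵥ ν = 1 → f ν = g ν) :
    boxBoundaryIntegral a b f = boxBoundaryIntegral a b g := by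
  simp only [boxBoundaryIntegral]
  refine Finset.sum_congr rfl fun j _ => ?_
  rw [hfg (Pi.single j 1) (by simp), hfg (-Pi.single j 1) (by simp)]

theorem boxBoundaryIntegral_normalPart_add_tangentialPart (hab : a ≤ b)
    {t : (Fin (n + 1) → ℝ) → (Fin (n + 1) → ℝ) → Fin (n + 1) → ℝ}
    {w : (Fin (n + 1) → ℝ) → Fin (n + 1) → ℝ}
    (ht : ∀ ν, ContinuousOn (t ν) (Set.Icc a b)) (hw : ContinuousOn w (Set.Icc a b)) :
    boxBoundaryIntegral a b (fun ν x => normalPart ν (t ν x) * normalPart ν (w x)) +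
        boxBoundaryIntegral a b (fun ν x => tangentialPart ν (t ν x) ⬝ᵥ tangentialPart ν (w x)) =
      boxBoundaryIntegral a b fun ν x => t ν x ⬝ᵥ w x := by
  rw [← boxBoundaryIntegral_add hab
    (fun ν => (continuousOn_normalPart (ht ν) ν).fun_mul (continuousOn_normalPart hw ν))
    (fun ν => continuousOn_dotProduct (continuousOn_tangentialPart (ht ν) ν)
      (continuousOn_tangentialPart hw ν))]
  exact boxBoundaryIntegral_congr fun ν hν => funext fun x =>
    normalPart_mul_add_tangentialPart_dotProduct hν (t ν x) (w x)

theorem boxBoundaryIntegral_dotProduct (v : (Fin (n + 1) → ℝ) → Fin (n + 1) → ℝ) :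
    boxBoundaryIntegral a b (fun ν x => v x ⬝ᵥ ν) =
      ∑ j, (boxFaceIntegral a b j (b j) (fun x => v x j) -
        boxFaceIntegral a b j (a j) (fun x => v x j)) := by
  simp only [boxBoundaryIntegral, boxFaceIntegral, dotProduct_neg, dotProduct_single, mul_one,
    integral_neg, sub_eq_add_neg]

theorem integral_trace_jacobian_eq_boxBoundaryIntegral (hab : a ≤ b)
    {v : (Fin (n + 1) → ℝ) → Fin (n + 1) → ℝ}
    (hv : ContinuousOn v (Set.Icc a b)) (hv' : DifferentiableOn ℝ v (interior (Set.Icc a b)))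
    (hdiv : IntegrableOn (fun x => trace (jacobian v x)) (Set.Icc a b)) :
    ∫ x in Set.Icc a b, trace (jacobian v x) = boxBoundaryIntegral a b fun ν x => v x ⬝ᵥ ν := by
  rw [boxBoundaryIntegral_dotProduct]
  refine integral_divergence_of_hasFDerivAt_off_countable a b hab v (fderiv ℝ v) ∅
    Set.countable_empty hv (fun x hx => ?_) hdiv
  have hx_interior : x ∈ interior (Set.Icc a b) := by
    simpa [← Set.pi_univ_Icc, interior_pi_set Set.finite_univ] using hx
  exact (hv'.differentiableAt (isOpen_interior.mem_nhds hx_interior)).hasFDerivAt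

theorem integral_trace_transpose_mul_jacobian_eq (hab : a ≤ b) {κ : Type*} [Fintype κ]
    {σ : (Fin (n + 1) → ℝ) → Matrix κ (Fin (n + 1)) ℝ} {u : (Fin (n + 1) → ℝ) → κ → ℝ}
    (hσ : ContinuousOn σ (Set.Icc a b)) (hu : ContinuousOn u (Set.Icc a b))
    (hσ' : DifferentiableOn ℝ σ (interior (Set.Icc a b)))
    (hu' : DifferentiableOn ℝ u (interior (Set.Icc a b)))
    (hgrad : IntegrableOn (fun x => trace ((σ x)ᵀ * jacobian u x)) (Set.Icc a b))
    (hdiv : IntegrableOn (fun x => rowDiv σ x ⬝ᵥ u x) (Set.Icc a b)) :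
    ∫ x in Set.Icc a b, trace ((σ x)ᵀ * jacobian u x) =
      -(∫ x in Set.Icc a b, rowDiv σ x ⬝ᵥ u x) +
        boxBoundaryIntegral a b fun ν x => (σ x *ᵥ ν) ⬝ᵥ u x := by
  -- `σ` and `u` need not be differentiable on the boundary of the box, which is a null set.
  have interior_ae_eq : (interior (Set.Icc a b) : Set _) =ᵐ[volume] Set.Icc a b :=
    interior_ae_eq_of_null_frontier ((convex_Icc a b).addHaar_frontier volume)
  have product_rule_ae : (fun x => trace (jacobian (fun y => u y ᵥ* σ y) x))
      =ᵐ[volume.restrict (Set.Icc a b)]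
        fun x => trace ((σ x)ᵀ * jacobian u x) + rowDiv σ x ⬝ᵥ u x := by
    rw [← Measure.restrict_congr_set interior_ae_eq]
    filter_upwards [self_mem_ae_restrict measurableSet_interior] with x hx
    have hx_nhds := isOpen_interior.mem_nhds hx
    exact trace_jacobian_vecMul (hσ'.differentiableAt hx_nhds) (hu'.differentiableAt hx_nhds)
  have hv : ContinuousOn (fun x => u x ᵥ* σ x) (Set.Icc a b) :=
    (continuous_fst.matrix_vecMul continuous_snd).comp_continuousOn (hu.prodMk hσ)
  have hv' : DifferentiableOn ℝ (fun x => u x ᵥ* σ x) (interior (Set.Icc a b)) := fun x hx =>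
    have hx_nhds := isOpen_interior.mem_nhds hx
    (hasFDerivAt_vecMul (hσ'.differentiableAt hx_nhds).hasFDerivAt
      (hu'.differentiableAt hx_nhds).hasFDerivAt).differentiableAt.differentiableWithinAt
  have divergence_theorem :=
    integral_trace_jacobian_eq_boxBoundaryIntegral hab hv hv'
      ((hgrad.add hdiv).congr product_rule_ae.symm)
  rw [integral_congr_ae product_rule_ae, integral_add hgrad hdiv] at divergence_theorem
  simp only [← dotProduct_mulVec, dotProduct_comm (u _)] at divergence_theorem
  linarith

theorem tdnns_duality_box_general (hab : a ≤ b)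
    {σ : (Fin (n + 1) → ℝ) → Matrix (Fin (n + 1)) (Fin (n + 1)) ℝ}
    {u : (Fin (n + 1) → ℝ) → Fin (n + 1) → ℝ} (hσsymm : ∀ x ∈ Set.Icc a b, (σ x).IsSymm)
    (hσ : ContinuousOn σ (Set.Icc a b)) (hu : ContinuousOn u (Set.Icc a b))
    (hσ' : DifferentiableOn ℝ σ (interior (Set.Icc a b)))
    (hu' : DifferentiableOn ℝ u (interior (Set.Icc a b)))
    (hstrain : IntegrableOn (fun x => trace ((σ x)ᵀ * symmGrad u x)) (Set.Icc a b))
    (hdiv : IntegrableOn (fun x => rowDiv σ x ⬝ᵥ u x) (Set.Icc a b)) :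
    (∫ x in Set.Icc a b, trace ((σ x)ᵀ * symmGrad u x)) -
        boxBoundaryIntegral a b
          (fun ν x => normalPart ν (σ x *ᵥ ν) * normalPart ν (u x)) =
      -(∫ x in Set.Icc a b, rowDiv σ x ⬝ᵥ u x) +
        boxBoundaryIntegral a b
          (fun ν x => tangentialPart ν (σ x *ᵥ ν) ⬝ᵥ tangentialPart ν (u x)) := by
  have strain_eq : Set.EqOn (fun x => trace ((σ x)ᵀ * symmGrad u x))
      (fun x => trace ((σ x)ᵀ * jacobian u x)) (Set.Icc a b) := fun x hx =>
    trace_transpose_mul_symmetrization (hσsymm x hx) (jacobian u x)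
  have traction_continuousOn (ν) : ContinuousOn (fun x => σ x *ᵥ ν) (Set.Icc a b) :=
    (continuous_id.matrix_mulVec continuous_const).comp_continuousOn hσ
  rw [setIntegral_congr_fun measurableSet_Icc strain_eq,
    integral_trace_transpose_mul_jacobian_eq hab hσ hu hσ' hu'
      (hstrain.congr_fun strain_eq measurableSet_Icc) hdiv,
    ← boxBoundaryIntegral_normalPart_add_tangentialPart hab traction_continuousOn hu]
  ring

end Box

/-- equivalence of the two elementwise representations of the
TDNNS duality product on the closed box `T = Icc a b ⊆ ℝ³`:
`∫_T σ:ε(u) dx − Σ_F ∫_F σ_nn u_n dS = −∫_T div σ · u dx + Σ_F ∫_F σ_nt·u_t dS`,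
the sums running over the six faces of `T`, with outward unit normals
`±e₁, ±e₂, ±e₃`. -/
theorem tdnns_duality_box
    (a b : Fin 3 → ℝ) (hab : ∀ i, a i ≤ b i)
    (σ : (Fin 3 → ℝ) → Matrix (Fin 3) (Fin 3) ℝ)
    (u : (Fin 3 → ℝ) → (Fin 3 → ℝ))
    (hσsymm : ∀ x, (σ x).IsSymm)
    (U : Set (Fin 3 → ℝ)) (hU : IsOpen U) (hTU : Set.Icc a b ⊆ U)
    (hσ : ContDiffOn ℝ 1 σ U) (hu : ContDiffOn ℝ 1 u U) :
    (∫ x in Set.Icc a b, Matrix.trace ((σ x)ᵀ * strainMat u x)) -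
        (∑ j : Fin 3,
          (faceIntegral a b j (b j)
              (fun x => sigNN σ (Pi.single j 1) x * uN u (Pi.single j 1) x) +
            faceIntegral a b j (a j)
              (fun x =>
                sigNN σ (-Pi.single j 1) x * uN u (-Pi.single j 1) x))) =
      -(∫ x in Set.Icc a b, divMat σ x ⬝ᵥ u x) +
        (∑ j : Fin 3,
          (faceIntegral a b j (b j)
              (fun x => sigNT σ (Pi.single j 1) x ⬝ᵥ uT u (Pi.single j 1) x) +
            faceIntegral a b j (a j)
              (fun x =>
                sigNT σ (-Pi.single j 1) x ⬝ᵥ uT u (-Pi.single j 1) x))) := by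
  have hσ_cont := hσ.continuousOn.mono hTU
  have hu_cont := hu.continuousOn.mono hTU
  have interior_subset_U := interior_subset.trans hTU
  exact tdnns_duality_box_general hab (fun x _ => hσsymm x) hσ_cont hu_cont
    ((hσ.differentiableOn one_ne_zero).mono interior_subset_U)
    ((hu.differentiableOn one_ne_zero).mono interior_subset_U)
    (integrableOn_trace_transpose_mul_symmGrad isCompact_Icc hU hTU hσ_cont hu)
    (integrableOn_rowDiv_dotProduct isCompact_Icc hU hTU hσ hu_cont)
end
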